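/- For a skew-symmetric real n×n matrix A, the map p : 2^{I} → ℝ defined by p(S) = Pf((a_{ij})_{i,j∈S}) is a twisted Pfaffian map: it is not identically zero, any two sets with nonzero value have cardinalities of equal parity, and it satisfies the Pfaffian exchange relation. -/

import Mathlib

/-- The Pfaffian of an `N × N` matrix (intended for skew-symmetric matrices):
`Pf(A) = ∑_{σ ∈ S'_N} sign(σ) ∏_{k=1}^{N/2} a_{σ(2k-1) σ(2k)}`, where `S'_N` is the
set of permutations `σ` of `{0, …, N-1}` such that `σ(2k)` is minimal among
`σ(2k), σ(2k+1), …, σ(N-1)` for each `k`.  It is `0` for odd `N` and `1` for `N = 0`. -/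
noncomputable def pfaffian {N : ℕ} (A : Matrix (Fin N) (Fin N) ℝ) : ℝ :=
  if h : 2 ∣ N then
    ∑ σ ∈ Finset.univ.filter
        (fun σ : Equiv.Perm (Fin N) =>
          ∀ p q : Fin N, 2 ∣ (p : ℕ) → p ≤ q → σ p ≤ σ q),
      ((Equiv.Perm.sign σ : ℤ) : ℝ) *
        ∏ k : Fin (N / 2),
          A (σ ⟨2 * (k : ℕ), by have := k.2; omega⟩)
            (σ ⟨2 * (k : ℕ) + 1, by have := k.2; omega⟩)
  else 0

/-- The Pfaffian of the principal minor of `A` indexed by the subset `S`,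
with rows and columns of the minor taken in increasing order of index. -/
noncomputable def pfMinor {n : ℕ} (A : Matrix (Fin n) (Fin n) ℝ) (S : Finset (Fin n)) : ℝ :=
  pfaffian (Matrix.of fun p q : Fin S.card =>
    A ((S.orderIsoOfFin rfl p : S) : Fin n) ((S.orderIsoOfFin rfl q : S) : Fin n))


/-- A **twisted Pfaffian map** on subsets of `{1,…,n}` (with real values):
it is not identically zero, any two sets with nonzero value have cardinalities of
equal parity, and it satisfies the Pfaffian exchange relation: whenever
`A Δ B = {i₁ < … < i_l}`, `∑_{j=1}^l (−1)^j p(A Δ {i_j}) p(B Δ {i_j}) = 0`. -/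
def IsTwistedPfaffianMap {n : ℕ} (p : Finset (Fin n) → ℝ) : Prop :=
  (∃ S, p S ≠ 0) ∧
  (∀ A B : Finset (Fin n), p A ≠ 0 → p B ≠ 0 → A.card % 2 = B.card % 2) ∧
  (∀ A B : Finset (Fin n),
    ∑ j : Fin (symmDiff A B).card,
      (-1 : ℝ) ^ ((j : ℕ) + 1) *
        p (symmDiff A {((symmDiff A B).orderIsoOfFin rfl j : Fin n)}) *
        p (symmDiff B {((symmDiff A B).orderIsoOfFin rfl j : Fin n)}) = 0)

/-!
Let `B` be the alternating form with matrix `A`. There is a linear functional `Φ` on the exterior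
algebra with `Φ 1 = 1` and `Φ (m ∧ x) = Φ (B m ⌋ x)`, where `⌋` is contraction. Applied to a product
of vectors, this rule is the expansion of a Pfaffian along its first row, so `Φ` takes the value
`Pf(A_S)` on the basis monomial `e_S`. Substituting `B e_s = ∑ t, B(e_s, e_t) e_t*` into
`∑ s, (Φ(e_s* ⌋ x) Φ(e_s ∧ y) + Φ(e_s ∧ x) Φ(e_s* ⌋ y))`
gives a double sum antisymmetric in `s` and `t`, which therefore vanishes. For `x = e_S` and
`y = e_T` the summand at `s` is zero unless `s ∈ S ∆ T`, and then equals
`± Φ(e_{S ∆ {s}}) Φ(e_{T ∆ {s}})`; the result is the exchange relation.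
-/

open Finset Equiv Equiv.Perm CliffordAlgebra ExteriorAlgebra
open scoped symmDiff

section Pfaffian

variable {N : ℕ}

/-- The permutations indexing the sum that defines `pfaffian`: those `σ` for which each
`σ (2k)` is the least of the values `σ (2k), σ (2k + 1), …`, so that the pairs
`{σ (2k), σ (2k + 1)}` form a perfect matching listed by increasing smaller elements. -/
abbrev IsOrderedPairing (σ : Perm (Fin N)) : Prop :=
  ∀ p q : Fin N, 2 ∣ (p : ℕ) → p ≤ q → σ p ≤ σ q

/-- The weight of the perfect matching `{σ (2k), σ (2k + 1)}` in the expansion of `pfaffian A`. -/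
def pairingWeight {R : Type*} [CommMonoid R] (A : Matrix (Fin N) (Fin N) R) (σ : Perm (Fin N)) :
    R :=
  ∏ k : Fin (N / 2), A (σ ⟨2 * k, by omega⟩) (σ ⟨2 * k + 1, by omega⟩)

/-- Extends a pairing `τ` by the pair `{0, j + 1}`: the permutation with `0 ↦ 0`, `1 ↦ j + 1`
which acts on the remaining points as `τ`, after order-preserving relabelling. -/
def insertPair (j : Fin (N + 1)) (τ : Perm (Fin N)) : Perm (Fin (N + 2)) :=
  decomposeFin.symm (0, j.cycleRange⁻¹ * decomposeFin.symm (0, τ))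

theorem insertPair_zero (j : Fin (N + 1)) (τ : Perm (Fin N)) : insertPair j τ 0 = 0 := by
  simp [insertPair]

theorem insertPair_one (j : Fin (N + 1)) (τ : Perm (Fin N)) : insertPair j τ 1 = j.succ := by
  simp [insertPair]

theorem insertPair_succ_succ (j : Fin (N + 1)) (τ : Perm (Fin N)) (k : Fin N) :
    insertPair j τ k.succ.succ = (j.succAbove (τ k)).succ := by
  simp [insertPair]

theorem sign_insertPair (j : Fin (N + 1)) (τ : Perm (Fin N)) :
    sign (insertPair j τ) = (-1) ^ (j : ℕ) * sign τ := by
  simp [insertPair]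

theorem insertPair_injective :
    Function.Injective fun x : Fin (N + 1) × Perm (Fin N) => insertPair x.1 x.2 := by
  rintro ⟨j, τ⟩ ⟨j', τ'⟩ h
  obtain rfl : j = j' := by
    simpa only [insertPair_one, Fin.succ_inj] using DFunLike.congr_fun h 1
  simpa [insertPair] using h

theorem exists_decomposeFin_symm_zero_eq {σ : Perm (Fin (N + 1))} (h : σ 0 = 0) :
    ∃ τ, decomposeFin.symm (0, τ) = σ := by
  obtain ⟨⟨p, τ⟩, rfl⟩ := decomposeFin.symm.surjective σ
  rw [decomposeFin_symm_apply_zero] at h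
  exact ⟨τ, by rw [h]⟩

theorem exists_insertPair_eq {σ : Perm (Fin (N + 2))} (h : σ 0 = 0) :
    ∃ j τ, insertPair j τ = σ := by
  obtain ⟨ρ, rfl⟩ := exists_decomposeFin_symm_zero_eq h
  obtain ⟨τ, hτ⟩ := exists_decomposeFin_symm_zero_eq (σ := (ρ 0).cycleRange * ρ) (by simp)
  exact ⟨ρ 0, τ, by rw [insertPair, hτ, inv_mul_cancel_left]⟩

theorem isOrderedPairing_insertPair {j : Fin (N + 1)} {τ : Perm (Fin N)} :
    IsOrderedPairing (insertPair j τ) ↔ IsOrderedPairing τ := by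
  have le_iff (p q : Fin N) :
      insertPair j τ p.succ.succ ≤ insertPair j τ q.succ.succ ↔ τ p ≤ τ q := by
    rw [insertPair_succ_succ, insertPair_succ_succ, Fin.succ_le_succ_iff,
      (Fin.strictMono_succAbove j).le_iff_le]
  constructor
  · intro h p q hp hpq
    exact (le_iff p q).1 (h p.succ.succ q.succ.succ (by simpa [add_assoc] using hp) (by simpa))
  · intro h p q hp hpq
    match p, q with
    | ⟨0, _⟩, q => exact (insertPair_zero j τ).trans_le (Fin.zero_le _)
    | ⟨1, _⟩, _ => simp at hp
    | ⟨p + 2, hp'⟩, ⟨q, hq'⟩ =>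
      obtain ⟨q, rfl⟩ : ∃ r, q = r + 2 := ⟨q - 2, by simp only [Fin.mk_le_mk] at hpq; omega⟩
      exact (le_iff ⟨p, by omega⟩ ⟨q, by omega⟩).2
        (h _ _ (by simpa using hp) (by simpa using hpq))

theorem filter_isOrderedPairing_add_two :
    ({σ | IsOrderedPairing σ} : Finset (Perm (Fin (N + 2)))) =
      (univ ×ˢ ({τ | IsOrderedPairing τ} : Finset (Perm (Fin N)))).image
        fun x => insertPair x.1 x.2 := by
  ext σ
  simp only [mem_filter, mem_univ, true_and, mem_image, mem_product, Prod.exists]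
  constructor
  · intro hσ
    have h0 : σ 0 = 0 := by simpa using hσ 0 (σ.symm 0) (by simp) (Fin.zero_le _)
    obtain ⟨j, τ, rfl⟩ := exists_insertPair_eq h0
    exact ⟨j, τ, isOrderedPairing_insertPair.1 hσ, rfl⟩
  · rintro ⟨j, τ, hτ, rfl⟩
    exact isOrderedPairing_insertPair.2 hτ

theorem pairingWeight_insertPair {R : Type*} [CommMonoid R]
    (A : Matrix (Fin (N + 2)) (Fin (N + 2)) R) (j : Fin (N + 1)) (τ : Perm (Fin N)) :
    pairingWeight A (insertPair j τ) = A 0 j.succ *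
      pairingWeight (A.submatrix (Fin.succ ∘ j.succAbove) (Fin.succ ∘ j.succAbove)) τ := by
  have hN : N / 2 + 1 = (N + 2) / 2 := by omega
  rw [pairingWeight, ← Fin.prod_congr' _ hN, Fin.prod_univ_succ]
  congr 1
  · exact congrArg₂ A (insertPair_zero j τ) (insertPair_one j τ)
  · refine Fintype.prod_congr _ _ fun k => ?_
    exact congrArg₂ A (insertPair_succ_succ j τ ⟨2 * k, by omega⟩)
      (insertPair_succ_succ j τ ⟨2 * k + 1, by omega⟩)

theorem pfaffian_eq_sum_pairingWeight (hN : 2 ∣ N) (A : Matrix (Fin N) (Fin N) ℝ) :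
    pfaffian A = ∑ σ with IsOrderedPairing σ, ((sign σ : ℤ) : ℝ) * pairingWeight A σ :=
  dif_pos hN

theorem pfaffian_eq_zero_of_not_two_dvd (hN : ¬ 2 ∣ N) (A : Matrix (Fin N) (Fin N) ℝ) :
    pfaffian A = 0 :=
  dif_neg hN

theorem pfaffian_fin_zero (A : Matrix (Fin 0) (Fin 0) ℝ) : pfaffian A = 1 := by
  rw [pfaffian_eq_sum_pairingWeight (dvd_zero 2), filter_true_of_mem fun _ _ p => p.elim0,
    Fintype.sum_unique]
  simp [pairingWeight]

theorem pfaffian_add_two (A : Matrix (Fin (N + 2)) (Fin (N + 2)) ℝ) :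
    pfaffian A = ∑ j : Fin (N + 1), (-1 : ℝ) ^ (j : ℕ) * A 0 j.succ *
      pfaffian (A.submatrix (Fin.succ ∘ j.succAbove) (Fin.succ ∘ j.succAbove)) := by
  by_cases hN : 2 ∣ N
  · simp only [pfaffian_eq_sum_pairingWeight hN, mul_sum]
    rw [pfaffian_eq_sum_pairingWeight (Nat.dvd_add_self_right.2 hN),
      filter_isOrderedPairing_add_two, sum_image insertPair_injective.injOn, sum_product]
    refine sum_congr rfl fun j _ => sum_congr rfl fun τ _ => ?_
    rw [sign_insertPair, pairingWeight_insertPair]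
    push_cast
    ring
  · rw [pfaffian_eq_zero_of_not_two_dvd (by omega)]
    simp only [pfaffian_eq_zero_of_not_two_dvd hN, mul_zero, sum_const_zero]

end Pfaffian

section WickFunctional

variable {R M : Type*} [CommRing R] [AddCommGroup M] [Module R M]

theorem contractLeft_ιMulti (d : Module.Dual R M) {N : ℕ} (f : Fin (N + 1) → M) :
    contractLeft d (ιMulti R (N + 1) f) =
      ∑ j : Fin (N + 1), ((-1) ^ (j : ℕ) * d (f j)) • ιMulti R N (f ∘ j.succAbove) := by
  induction N with
  | zero =>
    rw [ιMulti_succ_apply, contractLeft_ι_mul, ιMulti_zero_apply, contractLeft_one]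
    simp
  | succ N ih =>
    have tail_comp_succAbove (j : Fin (N + 1)) :
        Matrix.vecTail (f ∘ j.succ.succAbove) = Matrix.vecTail f ∘ j.succAbove := by
      ext k
      simp [Matrix.vecTail]
    rw [ιMulti_succ_apply, contractLeft_ι_mul, Fin.sum_univ_succ, ih, sub_eq_add_neg, mul_sum,
      ← sum_neg_distrib]
    congr 1
    · rw [Fin.val_zero, pow_zero, one_mul]
      rfl
    · refine sum_congr rfl fun j _ => ?_
      rw [ιMulti_succ_apply, tail_comp_succAbove, mul_smul_comm, ← neg_smul, Fin.val_succ, pow_succ,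
        mul_neg_one, neg_mul]
      rfl

variable {B : LinearMap.BilinForm R M}

/-- The Wick functional of an alternating form `B`: the linear functional `Φ` on the exterior
algebra with `Φ 1 = 1` and `Φ (ι m * x) = Φ (contractLeft (B m) x)`, whose value on a product of
vectors is the Pfaffian of their Gram matrix. It is the scalar part of the deformation
`changeForm` by `-B`, which maps the exterior algebra to itself because the quadratic form of `B`
vanishes. -/
noncomputable def wickFunctional (hB : B.IsAlt) : ExteriorAlgebra R M →ₗ[R] R :=
  algebraMapInv.toLinearMap ∘ₗ
    changeForm (B := -B) (Q := 0) (Q' := 0) (by ext m; simp [hB m])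

theorem wickFunctional_one (hB : B.IsAlt) : wickFunctional hB 1 = 1 := by
  rw [wickFunctional, LinearMap.comp_apply, changeForm_one]
  exact map_one algebraMapInv

theorem wickFunctional_ι_mul (hB : B.IsAlt) (m : M) (x : ExteriorAlgebra R M) :
    wickFunctional hB (ExteriorAlgebra.ι R m * x) = wickFunctional hB (contractLeft (B m) x) := by
  simp only [wickFunctional, LinearMap.comp_apply]
  rw [changeForm_ι_mul, changeForm_contractLeft]
  simp [algebraMapInv]

theorem pfaffian_gram_eq_wickFunctional {V : Type*} [AddCommGroup V] [Module ℝ V]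
    {B : LinearMap.BilinForm ℝ V} (hB : B.IsAlt) {N : ℕ} (f : Fin N → V) :
    pfaffian (Matrix.of fun p q => B (f p) (f q)) = wickFunctional hB (ιMulti ℝ N f) := by
  induction N using Nat.twoStepInduction with
  | zero => rw [pfaffian_fin_zero, ιMulti_zero_apply, wickFunctional_one]
  | one =>
    rw [pfaffian_eq_zero_of_not_two_dvd (by decide), ιMulti_succ_apply, ιMulti_zero_apply,
      wickFunctional_ι_mul, contractLeft_one, map_zero]
  | more N ih _ =>
    rw [ιMulti_succ_apply, wickFunctional_ι_mul, contractLeft_ιMulti, pfaffian_add_two, map_sum]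
    refine sum_congr rfl fun j _ => ?_
    rw [map_smul, ← ih, smul_eq_mul]
    rfl

variable {I : Type*} (b : Module.Basis I R M)

theorem wickFunctional_ι_basis_mul [Fintype I] (hB : B.IsAlt) (s : I)
    (x : ExteriorAlgebra R M) :
    wickFunctional hB (ExteriorAlgebra.ι R (b s) * x) =
      ∑ t, B (b s) (b t) * wickFunctional hB (contractLeft (b.coord t) x) := by
  conv_lhs => rw [wickFunctional_ι_mul, ← b.sum_dual_apply_smul_coord (B (b s))]
  simp only [map_sum, map_smul, LinearMap.sum_apply, LinearMap.smul_apply, smul_eq_mul]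

theorem wickFunctional_bilinear_identity [Fintype I] (hB : B.IsAlt) (x y : ExteriorAlgebra R M) :
    ∑ s, (wickFunctional hB (contractLeft (b.coord s) x) *
        wickFunctional hB (ExteriorAlgebra.ι R (b s) * y) +
      wickFunctional hB (ExteriorAlgebra.ι R (b s) * x) *
        wickFunctional hB (contractLeft (b.coord s) y)) = 0 := by
  simp only [wickFunctional_ι_basis_mul b, mul_sum, sum_mul, sum_add_distrib]
  rw [sum_comm, ← sum_add_distrib]
  refine sum_eq_zero fun s _ => ?_
  rw [← sum_add_distrib]
  refine sum_eq_zero fun t _ => ?_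
  rw [← hB.neg_eq (b s) (b t)]
  ring

end WickFunctional

section NumBelow

variable {I : Type*} [LinearOrder I]

/-- The number of elements of `S` below `s`; its parity is the sign picked up when the factor `s`
is moved to the front of the ordered product indexed by `insert s S`. -/
def numBelow (S : Finset I) (s : I) : ℕ :=
  #{x ∈ S | x < s}

theorem numBelow_eq_zero {S : Finset I} {s : I} (h : ∀ x ∈ S, s ≤ x) : numBelow S s = 0 :=
  card_eq_zero.2 <| filter_eq_empty_iff.2 fun x hx => (h x hx).not_gt

theorem numBelow_insert_of_lt {S : Finset I} {a s : I} (ha : a ∉ S) (has : a < s) :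
    numBelow (insert a S) s = numBelow S s + 1 := by
  rw [numBelow, filter_insert, if_pos has, card_insert_of_notMem fun h => ha (mem_filter.1 h).1,
    numBelow]

theorem numBelow_insert_self (S : Finset I) (s : I) : numBelow (insert s S) s = numBelow S s := by
  rw [numBelow, filter_insert, if_neg (lt_irrefl s), numBelow]

theorem numBelow_orderEmbOfFin (S : Finset I) (j : Fin #S) :
    numBelow S (S.orderEmbOfFin rfl j) = j := by
  have filter_eq : {x ∈ S | x < S.orderEmbOfFin rfl j} =
      (Iio j).map (S.orderEmbOfFin rfl).toEmbedding := by
    ext x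
    simp only [mem_filter, mem_map, mem_Iio]
    constructor
    · rintro ⟨hx, hlt⟩
      obtain ⟨i, rfl⟩ : x ∈ Set.range (S.orderEmbOfFin rfl) := by rwa [range_orderEmbOfFin]
      exact ⟨i, (S.orderEmbOfFin rfl).lt_iff_lt.1 hlt, rfl⟩
    · rintro ⟨i, hi, rfl⟩
      exact ⟨S.orderEmbOfFin_mem rfl i, (S.orderEmbOfFin rfl).lt_iff_lt.2 hi⟩
  rw [numBelow, filter_eq, card_map, Fin.card_Iio]

theorem neg_one_pow_numBelow_symmDiff {R : Type*} [Monoid R] [HasDistribNeg R]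
    (S T : Finset I) (s : I) :
    (-1 : R) ^ numBelow (S ∆ T) s = (-1) ^ numBelow S s * (-1) ^ numBelow T s := by
  have filter_symmDiff : {x ∈ S ∆ T | x < s} = {x ∈ S | x < s} ∆ {x ∈ T | x < s} := by
    ext x
    simp only [mem_symmDiff, mem_filter]
    tauto
  have card_symmDiff (X Y : Finset I) : #(X ∆ Y) + 2 * #(X ∩ Y) = #X + #Y := by
    have hX := card_sdiff_add_card_inter X Y
    have hY := card_sdiff_add_card_inter Y X
    rw [inter_comm] at hY
    rw [symmDiff_def, sup_eq_union, card_union_of_disjoint disjoint_sdiff_sdiff]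
    omega
  rw [← pow_add, numBelow, numBelow, numBelow, ← card_symmDiff, filter_symmDiff, pow_add, pow_mul,
    neg_one_sq, one_pow, mul_one]

theorem sum_orderEmbOfFin {α : Type*} [AddCommMonoid α] (S : Finset I) (g : ℕ → I → α) :
    ∑ j : Fin #S, g j (S.orderEmbOfFin rfl j) = ∑ s ∈ S, g (numBelow S s) s := by
  conv_rhs => rw [← S.map_orderEmbOfFin_univ rfl, sum_map]
  simp [numBelow_orderEmbOfFin]

end NumBelow

section SymmDiffSingleton

variable {I : Type*} [DecidableEq I] {S : Finset I} {s : I}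

theorem symmDiff_singleton_of_mem (h : s ∈ S) : S ∆ {s} = S.erase s := by
  ext x
  simp only [mem_symmDiff, mem_singleton, mem_erase]
  grind

theorem symmDiff_singleton_of_notMem (h : s ∉ S) : S ∆ {s} = insert s S := by
  ext x
  simp only [mem_symmDiff, mem_singleton, mem_insert]
  grind

end SymmDiffSingleton

section BasisMonomial

variable {R M I : Type*} [CommRing R] [AddCommGroup M] [Module R M] [LinearOrder I]
  (b : Module.Basis I R M)

theorem exteriorAlgebra_basis_eq_ιMulti (S : Finset I) :
    b.ExteriorAlgebra S = ιMulti R #S (b ∘ S.orderEmbOfFin rfl) :=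
  basis_apply b S

theorem exteriorAlgebra_basis_eq_prod_sort (S : Finset I) :
    b.ExteriorAlgebra S = (S.sort.map fun i => ExteriorAlgebra.ι R (b i)).prod := by
  rw [exteriorAlgebra_basis_eq_ιMulti, ιMulti_apply, ← S.listMap_orderEmbOfFin_finRange rfl,
    List.map_map, List.ofFn_eq_map]
  rfl

theorem exteriorAlgebra_basis_empty : b.ExteriorAlgebra ∅ = 1 := by
  rw [exteriorAlgebra_basis_eq_prod_sort, sort_empty, List.map_nil, List.prod_nil]

theorem exteriorAlgebra_basis_insert {a : I} {S : Finset I} (h : ∀ x ∈ S, a < x) :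
    b.ExteriorAlgebra (insert a S) = ExteriorAlgebra.ι R (b a) * b.ExteriorAlgebra S := by
  simp only [exteriorAlgebra_basis_eq_prod_sort]
  rw [sort_insert _ (fun x hx => (h x hx).le) (fun ha => (h a ha).false), List.map_cons,
    List.prod_cons]

theorem ι_mul_exteriorAlgebra_basis (s : I) (S : Finset I) :
    ExteriorAlgebra.ι R (b s) * b.ExteriorAlgebra S =
      if s ∈ S then 0 else (-1 : R) ^ numBelow S s • b.ExteriorAlgebra (insert s S) := by
  induction S using Finset.induction_on_min with
  | empty =>
    rw [if_neg (notMem_empty s), numBelow_eq_zero (by simp), pow_zero, one_smul,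
      exteriorAlgebra_basis_insert b (by simp)]
  | insert a S h ih =>
    have haS : a ∉ S := fun ha => (h a ha).false
    rcases lt_trichotomy s a with hs | rfl | hs
    · have hlt : ∀ x ∈ insert a S, s < x :=
        forall_mem_insert _ _ _ |>.2 ⟨hs, fun x hx => hs.trans (h x hx)⟩
      rw [if_neg fun hsS => (hlt s hsS).false, numBelow_eq_zero fun x hx => (hlt x hx).le, pow_zero,
        one_smul, exteriorAlgebra_basis_insert b hlt]
    · rw [if_pos (mem_insert_self _ _), exteriorAlgebra_basis_insert b h, ← mul_assoc, ι_sq_zero,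
        zero_mul]
    · have anticomm : ExteriorAlgebra.ι R (b s) * ExteriorAlgebra.ι R (b a) =
          -(ExteriorAlgebra.ι R (b a) * ExteriorAlgebra.ι R (b s)) :=
        eq_neg_of_add_eq_zero_left (ι_add_mul_swap _ _)
      rw [exteriorAlgebra_basis_insert b h, ← mul_assoc, anticomm, neg_mul, mul_assoc, ih]
      by_cases hsS : s ∈ S
      · rw [if_pos hsS, if_pos (mem_insert_of_mem hsS), mul_zero, neg_zero]
      · have hlt : ∀ x ∈ insert s S, a < x := forall_mem_insert _ _ _ |>.2 ⟨hs, h⟩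
        rw [if_neg hsS, if_neg (by simp [hsS, hs.ne']), numBelow_insert_of_lt haS hs, insert_comm,
          exteriorAlgebra_basis_insert b hlt, mul_smul_comm, pow_succ, mul_neg_one, neg_smul]

theorem contractLeft_coord_exteriorAlgebra_basis (s : I) (S : Finset I) :
    contractLeft (b.coord s) (b.ExteriorAlgebra S) =
      if s ∈ S then (-1 : R) ^ numBelow S s • b.ExteriorAlgebra (S.erase s) else 0 := by
  induction S using Finset.induction_on_min with
  | empty => rw [exteriorAlgebra_basis_empty, contractLeft_one, if_neg (notMem_empty s)]
  | insert a S h ih =>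
    have haS : a ∉ S := fun ha => (h a ha).false
    rw [exteriorAlgebra_basis_insert b h, contractLeft_ι_mul, ih, b.coord_apply, b.repr_self]
    by_cases hsS : s ∈ S
    · have has : a < s := h s hsS
      have hlt : ∀ x ∈ S.erase s, a < x := fun x hx => h x (mem_of_mem_erase hx)
      rw [Finsupp.single_eq_of_ne has.ne', zero_smul, zero_sub, if_pos hsS,
        if_pos (mem_insert_of_mem hsS), numBelow_insert_of_lt haS has, erase_insert_of_ne has.ne,
        exteriorAlgebra_basis_insert b hlt, mul_smul_comm, pow_succ, mul_neg_one, neg_smul]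
    · rw [if_neg hsS, mul_zero, sub_zero]
      obtain rfl | hsa := eq_or_ne s a
      · rw [Finsupp.single_eq_same, if_pos (mem_insert_self _ _), numBelow_insert_self,
          numBelow_eq_zero fun x hx => (h x hx).le, erase_insert hsS, pow_zero]
      · rw [Finsupp.single_eq_of_ne hsa, zero_smul, if_neg (by simp [hsa, hsS])]

theorem wickFunctional_exchange [Finite I] {B : LinearMap.BilinForm R M} (hB : B.IsAlt)
    (S T : Finset I) :
    ∑ s ∈ S ∆ T, (-1) ^ numBelow (S ∆ T) s *
      wickFunctional hB (b.ExteriorAlgebra (S ∆ {s})) *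
      wickFunctional hB (b.ExteriorAlgebra (T ∆ {s})) = 0 := by
  cases nonempty_fintype I
  rw [← wickFunctional_bilinear_identity b hB (b.ExteriorAlgebra S) (b.ExteriorAlgebra T),
    ← Fintype.sum_ite_mem]
  refine Fintype.sum_congr _ _ fun s => ?_
  simp only [ι_mul_exteriorAlgebra_basis, contractLeft_coord_exteriorAlgebra_basis,
    neg_one_pow_numBelow_symmDiff]
  by_cases hS : s ∈ S <;> by_cases hT : s ∈ T <;>
    simp only [mem_symmDiff, hS, hT, symmDiff_singleton_of_mem, symmDiff_singleton_of_notMem,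
      not_true_eq_false, not_false_eq_true, and_true, and_false, or_false, or_true, if_true,
      if_false, map_smul, map_zero, smul_eq_mul] <;>
    ring

end BasisMonomial

theorem isAlt_toBilin'_of_transpose_eq_neg {R m : Type*} [CommRing R] [NoZeroDivisors R]
    [CharZero R] [Fintype m] [DecidableEq m] {A : Matrix m m R} (hA : A.transpose = -A) :
    A.toBilin'.IsAlt := by
  refine LinearMap.isAlt_iff_eq_neg_flip.2 ?_
  refine LinearMap.ext_basis (Pi.basisFun R m) (Pi.basisFun R m) fun i j => ?_
  have hij : A j i = -A i j := congrFun₂ hA i j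
  simp [Matrix.toBilin'_single, hij]

section PfaffianMinor

variable {n : ℕ} {A : Matrix (Fin n) (Fin n) ℝ}

theorem pfMinor_eq_wickFunctional (hA : A.toBilin'.IsAlt) (S : Finset (Fin n)) :
    pfMinor A S = wickFunctional hA ((Pi.basisFun ℝ (Fin n)).ExteriorAlgebra S) := by
  rw [exteriorAlgebra_basis_eq_ιMulti, ← pfaffian_gram_eq_wickFunctional, pfMinor]
  simp only [Function.comp_apply, Pi.basisFun_apply, Matrix.toBilin'_single,
    coe_orderIsoOfFin_apply]

theorem pfMinor_empty (A : Matrix (Fin n) (Fin n) ℝ) : pfMinor A ∅ = 1 :=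
  pfaffian_fin_zero _

theorem even_card_of_pfMinor_ne_zero {S : Finset (Fin n)} (h : pfMinor A S ≠ 0) : Even #S := by
  rw [even_iff_two_dvd]
  contrapose! h
  exact pfaffian_eq_zero_of_not_two_dvd h _

theorem pfMinor_exchange (hA : A.toBilin'.IsAlt) (S T : Finset (Fin n)) :
    ∑ s ∈ S ∆ T, (-1) ^ numBelow (S ∆ T) s * pfMinor A (S ∆ {s}) * pfMinor A (T ∆ {s}) = 0 := by
  simp only [pfMinor_eq_wickFunctional hA, wickFunctional_exchange]

end PfaffianMinor

/-- For a skew-symmetric real `n × n` matrix `A`, the map `S ↦ Pf(A_S)` taking a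
subset to the Pfaffian of the corresponding principal minor is a twisted Pfaffian
map. -/
theorem pfMinor_isTwistedPfaffianMap {n : ℕ} (A : Matrix (Fin n) (Fin n) ℝ)
    (hA : A.transpose = -A) :
    IsTwistedPfaffianMap (fun S => pfMinor A S) := by
  have hB : A.toBilin'.IsAlt := isAlt_toBilin'_of_transpose_eq_neg hA
  refine ⟨⟨∅, ?_⟩, fun S T hS hT => ?_, fun S T => ?_⟩
  · exact (pfMinor_empty A).trans_ne one_ne_zero
  · rw [Nat.even_iff.1 (even_card_of_pfMinor_ne_zero hS),
      Nat.even_iff.1 (even_card_of_pfMinor_ne_zero hT)]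
  · have exchange := pfMinor_exchange hB S T
    rw [← sum_orderEmbOfFin (S ∆ T) fun k s =>
      (-1) ^ k * pfMinor A (S ∆ {s}) * pfMinor A (T ∆ {s})] at exchange
    simpa only [coe_orderIsoOfFin_apply, pow_succ, mul_neg_one, neg_mul, sum_neg_distrib,
      neg_eq_zero] using exchange
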